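/- arXiv:1102.0659 — 2 statements merged into one kernel-verified Lean document; each statement's English description precedes it below -/
import Mathlib

section
/- Let n be a natural number and let a, b, c be complex numbers such that for 0 ≤ k ≤ n the quantities (c)_k and (1−n+a+b−c)_k are nonzero, and (c)_n and (c−a−b)_n are nonzero. Then ∑_{k=0}^{n} ((a)_k (b)_k (−n)_k) / ((c)_k (1−n+a+b−c)_k k!) = ((c−a)_n (c−b)_n) / ((c)_n (c−a−b)_n). -/
/-- The rising factorial `(x)_m = x(x+1)⋯(x+m−1)`, with `(x)_0 = 1`. -/
def risingFactorial (x : ℂ) (m : ℕ) : ℂ := ∏ i ∈ Finset.range m, (x + i)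

theorem rf_zero (x : ℂ) : risingFactorial x 0 = 1 := by simp [risingFactorial]

theorem rf_succ (x : ℂ) (m : ℕ) :
    risingFactorial x (m + 1) = risingFactorial x m * (x + m) := by
  simp [risingFactorial, Finset.prod_range_succ]

theorem rf_succ_left (x : ℂ) (m : ℕ) :
    risingFactorial x (m + 1) = x * risingFactorial (x + 1) m := by
  simp only [risingFactorial, Finset.prod_range_succ']
  rw [mul_comm]
  congr 1
  · simp
  · apply Finset.prod_congr rfl
    intro i _
    push_cast
    ring

theorem rf_add (x : ℂ) (k m : ℕ) :
    risingFactorial x (k + m) = risingFactorial x k * risingFactorial (x + k) m := by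
  induction m with
  | zero => simp [rf_zero]
  | succ m ih =>
    rw [← add_assoc, rf_succ, ih, rf_succ]
    push_cast
    ring

theorem rf_neg (n k m : ℕ) (h : n = k + m) :
    risingFactorial (-(n : ℂ)) k = (-1) ^ k * ((n.choose k : ℂ) * (k.factorial : ℂ)) := by
  induction k generalizing m with
  | zero => simp [rf_zero]
  | succ k ih =>
    rw [rf_succ, ih (m + 1) (by omega)]
    have h1 : (n.choose (k + 1) : ℂ) * ((k : ℂ) + 1) = n.choose k * ((m : ℂ) + 1) := by
      have := Nat.choose_succ_right_eq n k
      rw [show n - k = m + 1 by omega] at this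
      exact_mod_cast this
    rw [Nat.factorial_succ, pow_succ]
    push_cast
    rw [h]
    rw [h] at h1
    push_cast
    linear_combination ((-1) ^ k * (k.factorial : ℂ)) * h1

theorem rf_refl (e : ℂ) (n k m : ℕ) (h : n = k + m) :
    risingFactorial (1 - n - e) k * risingFactorial e m = (-1) ^ k * risingFactorial e n := by
  induction k generalizing m with
  | zero => simp [rf_zero, h]
  | succ k ih =>
    have h2 := ih (m + 1) (by omega)
    rw [rf_succ] at h2 ⊢
    rw [pow_succ]
    have h3 : (n : ℂ) = k + 1 + m := by rw [h]; push_cast; ring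
    have h4 : (1 - (n : ℂ) - e + k) = -(e + m) := by rw [h3]; ring
    rw [h4]
    linear_combination -h2

theorem ps_poly (a b c : ℂ) (n : ℕ) :
    ∑ k ∈ Finset.range (n + 1), (n.choose k : ℂ) * risingFactorial a k * risingFactorial b k *
      risingFactorial (c - a - b) (n - k) * risingFactorial (c + k) (n - k)
      = risingFactorial (c - a) n * risingFactorial (c - b) n := by
  induction n with
  | zero => simp [rf_zero]
  | succ n ih =>
    set e := c - a - b with he
    let A : ℕ → ℂ := fun k => (n.choose k : ℂ) * risingFactorial a k * risingFactorial b k *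
      risingFactorial e (n + 1 - k) * risingFactorial (c + k) (n + 1 - k)
    let B : ℕ → ℂ := fun k => (n.choose k : ℂ) * risingFactorial a (k + 1) *
      risingFactorial b (k + 1) *
      risingFactorial e (n - k) * risingFactorial (c + k + 1) (n - k)
    let g : ℕ → ℂ := fun k => (k : ℂ) * (n.choose k : ℂ) * risingFactorial a k *
      risingFactorial b k *
      risingFactorial e (n + 1 - k) * risingFactorial (c + k) (n - k)
    have hS : ∑ k ∈ Finset.range (n + 1 + 1), ((n + 1).choose k : ℂ) * risingFactorial a k *
        risingFactorial b k * risingFactorial e (n + 1 - k) * risingFactorial (c + k) (n + 1 - k)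
        = ∑ k ∈ Finset.range (n + 1), (A k + B k) := by
      have hA : ∑ k ∈ Finset.range (n + 1), A k = ∑ k ∈ Finset.range (n + 1 + 1), A k := by
        rw [Finset.sum_range_succ A (n + 1)]
        simp [A]
      rw [Finset.sum_add_distrib, hA, Finset.sum_range_succ', Finset.sum_range_succ' A,
        add_right_comm, ← Finset.sum_add_distrib]
      congr 1
      · apply Finset.sum_congr rfl
        intro k _
        simp only [A, B, Nat.choose_succ_succ, Nat.add_sub_add_right]
        push_cast
        rw [← add_assoc c]
        ring
      · simp [A]
    have key : ∀ k ∈ Finset.range (n + 1), A k + B k =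
        (c - a + n) * (c - b + n) * ((n.choose k : ℂ) * risingFactorial a k *
          risingFactorial b k * risingFactorial e (n - k) * risingFactorial (c + k) (n - k))
        + (g (k + 1) - g k) := by
      intro k hk
      obtain ⟨m, rfl⟩ : ∃ m, n = k + m := ⟨n - k, by simp at hk; omega⟩
      simp only [A, B, g]
      rw [show k + m + 1 - k = m + 1 by omega, show k + m - k = m by omega,
        show k + m + 1 - (k + 1) = m by omega, show k + m - (k + 1) = m - 1 by omega]
      have h1 : ((k + m).choose (k + 1) : ℂ) * ((k : ℂ) + 1) = (k + m).choose k * (m : ℂ) := by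
        have := Nat.choose_succ_right_eq (k + m) k
        rw [show k + m - k = m by omega] at this
        exact_mod_cast this
      push_cast
      rw [← add_assoc c]
      generalize ((k + m).choose (k + 1) : ℂ) = D at *
      generalize ((k + m).choose k : ℂ) = C at *
      rw [rf_succ a, rf_succ b, rf_succ e, rf_succ (c + k)]
      cases m with
      | zero =>
        simp only [rf_zero, Nat.cast_zero] at *
        rw [he]
        linear_combination (-(risingFactorial a k * (a + k) * risingFactorial b k * (b + k) * 1 * risingFactorial (c + k + 1) (0 - 1))) * h1
      | succ m =>
        rw [Nat.add_sub_cancel, rf_succ_left (c + k) m, rf_succ (c + k + 1) m]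
        push_cast at *
        generalize risingFactorial e (m + 1) = E
        rw [he]
        linear_combination (-(risingFactorial a k * (a + k) * risingFactorial b k * (b + k) * E * risingFactorial (c + k + 1) m)) * h1
    rw [hS, Finset.sum_congr rfl key, Finset.sum_add_distrib, ← Finset.mul_sum, ih,
      Finset.sum_range_sub, rf_succ, rf_succ]
    simp [g]
    ring

/-- The Pfaff–Saalschütz summation:
`∑_{k=0}^{n} (a)_k (b)_k (−n)_k / ((c)_k (1−n+a+b−c)_k k!)
  = (c−a)_n (c−b)_n / ((c)_n (c−a−b)_n)`. -/
theorem pfaff_saalschutz (n : ℕ) (a b c : ℂ)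
    (hc : ∀ k ≤ n, risingFactorial c k ≠ 0)
    (hbal : ∀ k ≤ n, risingFactorial (1 - n + a + b - c) k ≠ 0)
    (hcab : risingFactorial (c - a - b) n ≠ 0) :
    ∑ k ∈ Finset.range (n + 1),
      (risingFactorial a k * risingFactorial b k * risingFactorial (-(n : ℂ)) k) /
        (risingFactorial c k * risingFactorial (1 - n + a + b - c) k *
          (k.factorial : ℂ))
      = (risingFactorial (c - a) n * risingFactorial (c - b) n) /
          (risingFactorial c n * risingFactorial (c - a - b) n) := by
  have hcn := hc n le_rfl
  rw [eq_div_iff (mul_ne_zero hcn hcab), ← ps_poly, Finset.sum_mul]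
  apply Finset.sum_congr rfl
  intro k hk
  obtain ⟨m, rfl⟩ : ∃ m, n = k + m := ⟨n - k, by simp at hk; omega⟩
  have h1 := hc k (by omega)
  have h2 := hbal k (by omega)
  have h3 : (k.factorial : ℂ) ≠ 0 := by exact_mod_cast k.factorial_ne_zero
  have h4 := rf_refl (c - a - b) (k + m) k m rfl
  rw [show (1 : ℂ) - ((k + m : ℕ) : ℂ) - (c - a - b) = 1 - ((k + m : ℕ) : ℂ) + a + b - c by ring]
    at h4
  rw [rf_neg (k + m) k m rfl, Nat.add_sub_cancel_left, rf_add c k m, div_mul_eq_mul_div,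
    div_eq_iff (mul_ne_zero (mul_ne_zero h1 h2) h3)]
  linear_combination (-(risingFactorial a k * risingFactorial b k * ((k + m).choose k : ℂ) *
    (k.factorial : ℂ) * risingFactorial c k * risingFactorial (c + k) m)) * h4
end

section
/- Let n be a natural number and let q, a, b, c be complex numbers with q ≠ 0, c ≠ 0, such that (c;q)_k, (a b q^{1−n}/c;q)_k and (q;q)_k are nonzero for 0 ≤ k ≤ n, and (c;q)_n and (c/(ab);q)_n are nonzero (with a, b ≠ 0). Then ∑_{k=0}^{n} ((a;q)_k (b;q)_k (q^{−n};q)_k) / ((c;q)_k (a b q^{1−n}/c;q)_k (q;q)_k) · q^k = ((c/a;q)_n (c/b;q)_n) / ((c;q)_n (c/(ab);q)_n). -/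
/-- The q-shifted factorial `(a;q)_m = (1−a)(1−aq)⋯(1−a q^{m−1})`, with `(a;q)_0 = 1`. -/
def qShiftedFactorial (a q : ℂ) (m : ℕ) : ℂ := ∏ i ∈ Finset.range m, (1 - a * q ^ i)

lemma qsf_succ (a q : ℂ) (m : ℕ) :
    qShiftedFactorial a q (m + 1) = qShiftedFactorial a q m * (1 - a * q ^ m) := by
  simp [qShiftedFactorial, Finset.prod_range_succ]

lemma qsf_zero (a q : ℂ) : qShiftedFactorial a q 0 = 1 := by
  simp [qShiftedFactorial]

lemma qsf_ne_of_le {a q : ℂ} {m n : ℕ} (h : m ≤ n) (hn : qShiftedFactorial a q n ≠ 0) :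
    qShiftedFactorial a q m ≠ 0 := by
  unfold qShiftedFactorial at *
  rw [Finset.prod_ne_zero_iff] at *
  intro i hi
  apply hn
  simp only [Finset.mem_range] at *
  omega

/-- The normalised summand. -/
noncomputable def sTerm (q a b d : ℂ) (k m : ℕ) : ℂ :=
  qShiftedFactorial a q k * qShiftedFactorial b q k * d ^ k * qShiftedFactorial d q m /
    (qShiftedFactorial q q k * qShiftedFactorial q q m * qShiftedFactorial (a * b * d) q k)

lemma sTerm_rec (q a b d : ℂ) (hq : q ≠ 0) (k m : ℕ)
    (h1 : qShiftedFactorial q q (k + 1) ≠ 0) (h2 : qShiftedFactorial q q (m + 1) ≠ 0)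
    (h3 : qShiftedFactorial (a * b * d) q (k + 1) ≠ 0) :
    (1 - q ^ (k + m + 1)) * (1 - a * b * d * q ^ (k + m)) * sTerm q a b d k (m + 1)
      - (1 - a * d * q ^ (k + m)) * (1 - b * d * q ^ (k + m)) * sTerm q a b d k m
    = -(q ^ m * (1 - q ^ (k + 1)) * (q - a * b * d * q ^ (k + 1)) / q * sTerm q a b d (k + 1) m)
      + q ^ m * (1 - q ^ k) * (q - a * b * d * q ^ k) * sTerm q a b d k (m + 1) := by
  unfold sTerm
  rw [qsf_succ] at h1 h2 h3
  simp only [qsf_succ]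
  obtain ⟨h1, h1'⟩ := mul_ne_zero_iff.1 h1
  obtain ⟨h2, h2'⟩ := mul_ne_zero_iff.1 h2
  obtain ⟨h3, h3'⟩ := mul_ne_zero_iff.1 h3
  simp only [pow_succ, pow_add]
  generalize qShiftedFactorial q q k = Q1 at *
  generalize qShiftedFactorial q q m = Q2 at *
  generalize qShiftedFactorial (a * b * d) q k = Q3 at *
  generalize qShiftedFactorial a q k = Q4 at *
  generalize qShiftedFactorial b q k = Q5 at *
  generalize qShiftedFactorial d q m = Q6 at *
  generalize q ^ k = X at *
  generalize q ^ m = Y at *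
  generalize d ^ k = D at *
  obtain ⟨u, hu⟩ : ∃ u, u = 1 - q * X := ⟨_, rfl⟩
  obtain ⟨v, hv⟩ : ∃ v, v = 1 - q * Y := ⟨_, rfl⟩
  obtain ⟨w, hw⟩ : ∃ w, w = 1 - a * b * d * X := ⟨_, rfl⟩
  rw [← hu] at h1' ⊢
  rw [← hv] at h2' ⊢
  rw [← hw] at h3' ⊢
  clear h1 h2 h3
  field_simp
  rw [hu, hv, hw]
  ring

lemma sTerm_sum (q a b d : ℂ) (hq : q ≠ 0) (n : ℕ) (h1 : qShiftedFactorial q q n ≠ 0)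
    (h3 : qShiftedFactorial (a * b * d) q n ≠ 0) :
    ∑ k ∈ Finset.range (n + 1), sTerm q a b d k (n - k) =
      qShiftedFactorial (a * d) q n * qShiftedFactorial (b * d) q n /
        (qShiftedFactorial q q n * qShiftedFactorial (a * b * d) q n) := by
  induction n with
  | zero => simp [sTerm, qsf_zero]
  | succ n ih =>
    have ih := ih (qsf_ne_of_le (Nat.le_succ n) h1) (qsf_ne_of_le (Nat.le_succ n) h3)
    have key := Finset.sum_range_sub (fun k => -(q ^ (n + 1 - k) / q * (1 - q ^ k) *
      (q - a * b * d * q ^ k) * sTerm q a b d k (n + 1 - k))) (n + 1)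
    have e : ∀ k ∈ Finset.range (n + 1),
        (-(q ^ (n + 1 - (k + 1)) / q * (1 - q ^ (k + 1)) *
          (q - a * b * d * q ^ (k + 1)) * sTerm q a b d (k + 1) (n + 1 - (k + 1)))) -
        (-(q ^ (n + 1 - k) / q * (1 - q ^ k) *
          (q - a * b * d * q ^ k) * sTerm q a b d k (n + 1 - k))) =
        (1 - q ^ (n + 1)) * (1 - a * b * d * q ^ n) * sTerm q a b d k (n + 1 - k)
        - (1 - a * d * q ^ n) * (1 - b * d * q ^ n) * sTerm q a b d k (n - k) := by
      intro k hk
      obtain ⟨m, rfl⟩ := Nat.exists_eq_add_of_le (Nat.lt_succ_iff.1 (Finset.mem_range.1 hk))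
      have r := sTerm_rec q a b d hq k m (qsf_ne_of_le (by omega) h1)
        (qsf_ne_of_le (by omega) h1) (qsf_ne_of_le (by omega) h3)
      have e1 : k + m + 1 - (k + 1) = m := by omega
      have e2 : k + m + 1 - k = m + 1 := by omega
      have e3 : k + m - k = m := by omega
      rw [e1, e2, e3, r, pow_succ q m]
      field_simp
      ring
    rw [Finset.sum_congr rfl e, Finset.sum_sub_distrib, ← Finset.mul_sum, ← Finset.mul_sum,
      ih] at key
    rw [Finset.sum_range_succ]
    rw [qsf_succ] at h1 h3
    simp only [qsf_succ]
    obtain ⟨h1, h1'⟩ := mul_ne_zero_iff.1 h1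
    obtain ⟨h3, h3'⟩ := mul_ne_zero_iff.1 h3
    simp only [Nat.sub_self, pow_zero, sub_self, mul_zero, zero_mul, neg_zero, sub_zero] at key ⊢
    generalize ∑ k ∈ Finset.range (n + 1), sTerm q a b d k (n + 1 - k) = S at *
    generalize sTerm q a b d (n + 1) 0 = U at *
    have h1'' : 1 - q ^ (n + 1) ≠ 0 := by rwa [pow_succ']
    have key2 : (1 - q * q ^ n) * (1 - a * b * d * q ^ n) * (S + U) =
        (1 - a * d * q ^ n) * (1 - b * d * q ^ n) *
        (qShiftedFactorial (a * d) q n * qShiftedFactorial (b * d) q n /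
        (qShiftedFactorial q q n * qShiftedFactorial (a * b * d) q n)) := by
      have : 1 / q * (q - a * b * d * q ^ (n + 1)) = 1 - a * b * d * q ^ n := by
        field_simp
        ring
      linear_combination key - (1 - q ^ (n + 1)) * U * this
    rw [eq_div_iff (by simp [*])]
    field_simp at key2
    linear_combination key2

lemma qsf_rev (x q : ℂ) (hx : x ≠ 0) (hq : q ≠ 0) (n k m : ℕ) (h : n = k + m) :
    qShiftedFactorial (x⁻¹ * q ^ (1 - (n : ℤ))) q k * qShiftedFactorial x q m * (-x) ^ k =
      qShiftedFactorial x q n * ∏ i ∈ Finset.range k, (q ^ (1 - (n : ℤ)) * q ^ i) := by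
  induction k generalizing m with
  | zero => simp [qsf_zero, h]
  | succ k ih =>
    have r := ih (m + 1) (by omega)
    rw [qsf_succ] at r
    rw [qsf_succ, Finset.prod_range_succ, ← mul_assoc, ← r]
    have e : q ^ (1 - (n : ℤ)) * q ^ k * q ^ m = 1 := by
      rw [← zpow_natCast q k, ← zpow_natCast q m, ← zpow_add₀ hq, ← zpow_add₀ hq]
      rw [h]
      push_cast
      ring_nf
      simp
    have e2 : (1 - x⁻¹ * q ^ (1 - (n : ℤ)) * q ^ k) * (-x) =
        (1 - x * q ^ m) * (q ^ (1 - (n : ℤ)) * q ^ k) := by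
      have : x⁻¹ * x = 1 := inv_mul_cancel₀ hx
      linear_combination x * e + q ^ (1 - (n : ℤ)) * q ^ k * this
    rw [pow_succ]
    linear_combination qShiftedFactorial (x⁻¹ * q ^ (1 - (n : ℤ))) q k *
      qShiftedFactorial x q m * (-x) ^ k * e2

/-- Jackson's q-analog of the Pfaff–Saalschütz sum:
`∑_{k=0}^{n} (a;q)_k (b;q)_k (q^{−n};q)_k / ((c;q)_k (abq^{1−n}/c;q)_k (q;q)_k) · q^k
  = (c/a;q)_n (c/b;q)_n / ((c;q)_n (c/(ab);q)_n)`. -/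
theorem q_pfaff_saalschutz (n : ℕ) (q a b c : ℂ)
    (hq : q ≠ 0) (hc : c ≠ 0) (ha : a ≠ 0) (hb : b ≠ 0)
    (hck : ∀ k ≤ n, qShiftedFactorial c q k ≠ 0)
    (habk : ∀ k ≤ n, qShiftedFactorial (a * b * q ^ (1 - (n : ℤ)) / c) q k ≠ 0)
    (hqq : ∀ k ≤ n, qShiftedFactorial q q k ≠ 0)
    (hcab : qShiftedFactorial (c / (a * b)) q n ≠ 0) :
    ∑ k ∈ Finset.range (n + 1),
      (qShiftedFactorial a q k * qShiftedFactorial b q k *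
          qShiftedFactorial (q ^ (-(n : ℤ))) q k) /
        (qShiftedFactorial c q k *
          qShiftedFactorial (a * b * q ^ (1 - (n : ℤ)) / c) q k *
          qShiftedFactorial q q k) * q ^ k
      = (qShiftedFactorial (c / a) q n * qShiftedFactorial (c / b) q n) /
          (qShiftedFactorial c q n * qShiftedFactorial (c / (a * b)) q n) := by
  have hab : a * b ≠ 0 := mul_ne_zero ha hb
  obtain ⟨d, hd⟩ : ∃ d, d = c / (a * b) := ⟨_, rfl⟩
  have hd0 : d ≠ 0 := by rw [hd]; exact div_ne_zero hc hab
  have hcd : c = a * b * d := by rw [hd]; field_simp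
  have e1 : c / a = b * d := by rw [hcd]; field_simp
  have e2 : c / b = a * d := by rw [hcd]; field_simp
  have e3 : a * b * q ^ (1 - (n : ℤ)) / c = d⁻¹ * q ^ (1 - (n : ℤ)) := by rw [hcd]; field_simp
  have e4 : q ^ (-(n : ℤ)) = q⁻¹ * q ^ (1 - (n : ℤ)) := by
    rw [← zpow_neg_one, ← zpow_add₀ hq]
    congr 1
    ring
  have hcn := hck n le_rfl
  have hqn := hqq n le_rfl
  rw [← hd] at hcab
  have key := sTerm_sum q a b d hq n hqn (hcd ▸ hcn)
  rw [e1, e2, ← hd]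
  have t : ∀ k ∈ Finset.range (n + 1),
      (qShiftedFactorial a q k * qShiftedFactorial b q k *
          qShiftedFactorial (q ^ (-(n : ℤ))) q k) /
        (qShiftedFactorial c q k *
          qShiftedFactorial (a * b * q ^ (1 - (n : ℤ)) / c) q k *
          qShiftedFactorial q q k) * q ^ k =
      qShiftedFactorial q q n / qShiftedFactorial d q n * sTerm q a b d k (n - k) := by
    intro k hk
    have hk : k ≤ n := Nat.lt_succ_iff.1 (Finset.mem_range.1 hk)
    have r1 := qsf_rev q q hq hq n k (n - k) (by omega)
    have r2 := qsf_rev d q hd0 hq n k (n - k) (by omega)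
    have n1 := hck k hk
    have n2 := habk k hk
    have n3 := hqq k hk
    have n4 := hqq (n - k) (by omega)
    rw [e3] at n2 ⊢
    rw [e4]
    unfold sTerm
    rw [← hcd]
    have hE : ∏ i ∈ Finset.range k, (q ^ (1 - (n : ℤ)) * q ^ i) ≠ 0 :=
      Finset.prod_ne_zero_iff.2 fun i _ => mul_ne_zero (zpow_ne_zero _ hq) (pow_ne_zero _ hq)
    rw [neg_pow] at r1 r2
    have hs : ((-1 : ℂ)) ^ k ≠ 0 := pow_ne_zero _ (by norm_num)
    generalize ∏ i ∈ Finset.range k, (q ^ (1 - (n : ℤ)) * q ^ i) = E at *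
    generalize qShiftedFactorial (q⁻¹ * q ^ (1 - (n : ℤ))) q k = A at *
    generalize qShiftedFactorial (d⁻¹ * q ^ (1 - (n : ℤ))) q k = B at *
    have m : A * q ^ k * qShiftedFactorial q q (n - k) * qShiftedFactorial d q n =
        B * d ^ k * qShiftedFactorial d q (n - k) * qShiftedFactorial q q n := by
      apply mul_right_cancel₀ (mul_ne_zero hE hs)
      linear_combination qShiftedFactorial d q n * E * r1 - qShiftedFactorial q q n * E * r2
    field_simp
    linear_combination qShiftedFactorial a q k * qShiftedFactorial b q k * m
  rw [Finset.sum_congr rfl t, ← Finset.mul_sum, key, ← hcd]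
  field_simp
end
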